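/- If n ≤ d + 1, then the restriction to the interval [0, d c⃗] of the quotient map 𝕃 → 𝕃/ℤω⃗ is a bijection from [0, d c⃗] onto 𝕃/ℤω⃗. -/

import Mathlib

/-- The subgroup of relations `p i • x⃗_i − c⃗` inside the free abelian group
`(Fin n → ℤ) × ℤ` on the generators `x⃗_1, …, x⃗_n, c⃗`. -/
def GLrels (n : ℕ) (p : Fin n → ℕ) : AddSubgroup ((Fin n → ℤ) × ℤ) :=
  AddSubgroup.closure (Set.range fun i : Fin n => ((Pi.single i (p i : ℤ), -1) : (Fin n → ℤ) × ℤ))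

/-- The grading group `𝕃 = ⟨x⃗_1, …, x⃗_n, c⃗⟩ / ⟨p_i x⃗_i − c⃗⟩`. -/
abbrev GLgroup (n : ℕ) (p : Fin n → ℕ) : Type :=
  ((Fin n → ℤ) × ℤ) ⧸ GLrels n p

/-- The generator `x⃗_i` of `𝕃`. -/
def GLx (n : ℕ) (p : Fin n → ℕ) (i : Fin n) : GLgroup n p :=
  QuotientAddGroup.mk (Pi.single i 1, 0)

/-- The generator `c⃗` of `𝕃`. -/
def GLc (n : ℕ) (p : Fin n → ℕ) : GLgroup n p :=
  QuotientAddGroup.mk (0, 1)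

/-- The positive cone `𝕃_+`: the submonoid of `𝕃` generated by `x⃗_1, …, x⃗_n` and `c⃗`. -/
def GLplus (n : ℕ) (p : Fin n → ℕ) : AddSubmonoid (GLgroup n p) :=
  AddSubmonoid.closure ({GLc n p} ∪ Set.range (GLx n p))

/-- The partial order relation on `𝕃`: `x⃗ ≤ y⃗` iff `y⃗ − x⃗ ∈ 𝕃_+`. -/
def GLle (n : ℕ) (p : Fin n → ℕ) (x y : GLgroup n p) : Prop :=
  y - x ∈ GLplus n p

/-- The dualizing element `ω⃗ = (n − d − 1) c⃗ − Σ_i x⃗_i` of `𝕃`. -/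
def GLomega (d n : ℕ) (p : Fin n → ℕ) : GLgroup n p :=
  ((n : ℤ) - d - 1) • GLc n p - ∑ i, GLx n p i

/-!
Every element of `𝕃` is `∑ aᵢ x⃗ᵢ + a c⃗` for unique integers `0 ≤ aᵢ < pᵢ` and `a`, and it lies in
`𝕃₊` iff `a ≥ 0`. Write `ω⃗₀ = (n - 1) c⃗ - ∑ x⃗ᵢ = d c⃗ + ω⃗` for the dualizing element with
`d = 0`. The reflection `z ↦ ω⃗₀ - z` replaces `aᵢ` by `pᵢ - 1 - aᵢ` and `a` by `-1 - a`, so it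
exchanges `𝕃₊` with its complement. Since `d c⃗ - z = ω⃗₀ - (z + ω⃗)`, this gives `z ≤ d c⃗` iff
`z + ω⃗ ∉ 𝕃₊`: the interval `[0, d c⃗]` consists of the points of `𝕃₊` that a step by `ω⃗` takes
out of `𝕃₊`.

If `n ≤ d + 1`, then `-ω⃗ ∈ 𝕃₊` and some positive multiple of `-ω⃗` is a positive multiple of `c⃗`.
Hence, as `k` increases, `z - k ω⃗` never leaves `𝕃₊` after entering it, is outside for `k ≪ 0` and
inside for `k ≫ 0`. So each coset of `ℤω⃗` contains exactly one point at which it enters `𝕃₊`.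
-/

theorem existsUnique_mem_sub_one_notMem {S : Set ℤ} (hS : IsUpperSet S) (hne : S.Nonempty)
    (hne' : Sᶜ.Nonempty) : ∃! k, k ∈ S ∧ k - 1 ∉ S := by
  obtain ⟨b, hb⟩ := hne'
  have lower_bound : ∀ k ∈ S, b ≤ k := fun k hk => le_of_not_ge fun hkb => hb (hS hkb hk)
  obtain ⟨k, hk, hmin⟩ := Int.exists_least_of_bdd ⟨b, lower_bound⟩ hne
  have pred_notMem : k - 1 ∉ S := fun h => absurd (hmin _ h) (by lia)
  refine ⟨k, ⟨hk, pred_notMem⟩, fun j ⟨hj, hj'⟩ => le_antisymm ?_ (hmin j hj)⟩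
  by_contra! hkj
  exact hj' (hS (by lia) hk)

section Quotient

variable {G : Type*} [AddCommGroup G]

theorem bijOn_mk'_of_isComplement {S : Set G} {H : AddSubgroup G}
    (h : AddSubgroup.IsComplement S (H : Set G)) :
    Set.BijOn (QuotientAddGroup.mk' H) S Set.univ := by
  have bijective := AddSubgroup.isComplement_addSubgroup_right_iff_bijective.mp h
  refine ⟨Set.mapsTo_univ _ _, Set.injOn_iff_injective.mpr bijective.injective, fun q _ => ?_⟩
  obtain ⟨s, hs⟩ := bijective.surjective q
  exact ⟨s, s.2, hs⟩

theorem isComplement_zmultiples_of_neg_mem {M : AddSubmonoid G} {v : G} (hv : -v ∈ M)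
    (hmem : ∀ z, ∃ k : ℤ, z - k • v ∈ M) (hnotMem : ∀ z, ∃ k : ℤ, z - k • v ∉ M) :
    AddSubgroup.IsComplement {z | z ∈ M ∧ z + v ∉ M} (AddSubgroup.zmultiples v : Set G) := by
  rw [AddSubgroup.isComplement_iff_existsUnique_add_neg_mem]
  intro z
  have isUpperSet : IsUpperSet {k : ℤ | z - k • v ∈ M} := by
    intro j k hjk hj
    obtain ⟨m, rfl⟩ := Int.le.dest hjk
    have : z - (j + m : ℤ) • v = z - j • v + m • -v := by
      rw [add_zsmul, natCast_zsmul, smul_neg]; abel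
    rw [Set.mem_ofPred_eq, this]
    exact add_mem hj (nsmul_mem hv m)
  have mem_iff (k : ℤ) : z + -(k • v) ∈ {z | z ∈ M ∧ z + v ∉ M} ↔
      k ∈ {k : ℤ | z - k • v ∈ M} ∧ k - 1 ∉ {k : ℤ | z - k • v ∈ M} := by
    have : z - k • v + v = z - (k - 1) • v := by rw [sub_one_zsmul]; abel
    simp only [Set.mem_ofPred_eq, ← sub_eq_add_neg, this]
  obtain ⟨k, hk, unique⟩ := existsUnique_mem_sub_one_notMem isUpperSet (hmem z) (hnotMem z)
  refine ⟨⟨k • v, k, rfl⟩, (mem_iff k).mpr hk, ?_⟩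
  rintro ⟨_, j, rfl⟩ hj
  exact Subtype.ext (congrArg (· • v) (unique j ((mem_iff j).mp hj)))

end Quotient

namespace GLgroup

variable {n : ℕ} {p : Fin n → ℕ}

theorem mk_eq_mk_iff {w w' : (Fin n → ℤ) × ℤ} :
    (w : GLgroup n p) = w' ↔
      ∃ k : Fin n → ℤ, (∀ i, w'.1 i = w.1 i + k i * p i) ∧ w'.2 = w.2 - ∑ i, k i := by
  rw [QuotientAddGroup.eq, GLrels, AddSubgroup.mem_closure_range_iff_of_fintype]
  refine exists_congr fun k => ?_
  rw [neg_add_eq_iff_eq_add, Prod.ext_iff, funext_iff]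
  simp [Prod.fst_sum, Prod.snd_sum, Finset.sum_apply, Pi.single_apply, sub_eq_add_neg]

theorem mk_eq_sum (w : (Fin n → ℤ) × ℤ) :
    (w : GLgroup n p) = ∑ i, w.1 i • GLx n p i + w.2 • GLc n p := by
  have : w = ∑ i, w.1 i • ((Pi.single i 1, 0) : (Fin n → ℤ) × ℤ) + w.2 • (0, 1) := by
    ext j
    · simp [Prod.fst_sum, Finset.sum_apply, Pi.single_apply]
    · simp [Prod.snd_sum]
  conv_lhs => rw [this, ← QuotientAddGroup.mk'_apply, map_add, map_sum, map_zsmul]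
  simp only [map_zsmul]
  rfl

theorem zsmul_GLc (a : ℤ) : a • GLc n p = ((0, a) : (Fin n → ℤ) × ℤ) := by
  simp [mk_eq_sum]

theorem GLomega_eq_mk (d : ℕ) :
    GLomega d n p = ((fun _ => -1, (n : ℤ) - d - 1) : (Fin n → ℤ) × ℤ) := by
  rw [GLomega, mk_eq_sum, sub_eq_neg_add]
  simp

theorem nsmul_GLx (i : Fin n) : p i • GLx n p i = GLc n p := by
  refine mk_eq_mk_iff.mpr ⟨Pi.single i (-1), fun j => ?_, by simp⟩
  by_cases h : j = i
  · subst h; simp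
  · simp [h]

theorem mem_GLplus_iff_exists_nonneg {z : GLgroup n p} :
    z ∈ GLplus n p ↔ ∃ w : (Fin n → ℤ) × ℤ, 0 ≤ w ∧ (w : GLgroup n p) = z := by
  constructor
  · intro hz
    induction hz using AddSubmonoid.closure_induction with
    | mem z hz =>
      rcases hz with rfl | ⟨i, rfl⟩
      · exact ⟨(0, 1), by simp [Prod.le_def], rfl⟩
      · exact ⟨(Pi.single i 1, 0), by simp [Prod.le_def], rfl⟩
    | zero => exact ⟨0, le_rfl, rfl⟩
    | add _ _ _ _ hx hy =>
      obtain ⟨u, hu, rfl⟩ := hx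
      obtain ⟨v, hv, rfl⟩ := hy
      exact ⟨u + v, add_nonneg hu hv, rfl⟩
  · rintro ⟨w, ⟨hx, hc⟩, rfl⟩
    have zsmul_mem {a : ℤ} {g : GLgroup n p} (ha : 0 ≤ a)
        (hg : g ∈ {GLc n p} ∪ Set.range (GLx n p)) : a • g ∈ GLplus n p := by
      lift a to ℕ using ha
      rw [natCast_zsmul]
      exact nsmul_mem (AddSubmonoid.subset_closure hg) a
    rw [mk_eq_sum]
    exact add_mem (sum_mem fun i _ => zsmul_mem (hx i) (.inr ⟨i, rfl⟩)) (zsmul_mem hc (.inl rfl))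

/-- The coefficient of `c⃗` in the normal form `∑ aᵢ x⃗ᵢ + a c⃗`, `0 ≤ aᵢ < pᵢ`, of the element
of `𝕃` represented by `w`; its sign decides membership in the positive cone. It is defined on
representatives because it descends to `𝕃` only if all `pᵢ` are positive. -/
def level (p : Fin n → ℕ) (w : (Fin n → ℤ) × ℤ) : ℤ :=
  w.2 + ∑ i, w.1 i / (p i : ℤ)

theorem mk_mem_GLplus_iff (hp : ∀ i, 0 < p i) (w : (Fin n → ℤ) × ℤ) :
    (w : GLgroup n p) ∈ GLplus n p ↔ 0 ≤ level p w := by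
  have p_ne_zero (i : Fin n) : (p i : ℤ) ≠ 0 := mod_cast (hp i).ne'
  rw [mem_GLplus_iff_exists_nonneg]
  constructor
  · rintro ⟨u, ⟨hx, hc⟩, huw⟩
    obtain ⟨k, hk, hk'⟩ := mk_eq_mk_iff.mp huw
    have level_eq : level p w = level p u := by
      simp only [level, hk, hk', Int.add_mul_ediv_right _ _ (p_ne_zero _), Finset.sum_add_distrib]
      ring
    rw [level_eq]
    exact add_nonneg hc (Finset.sum_nonneg fun i _ => Int.ediv_nonneg (hx i) (by positivity))
  · intro hw
    refine ⟨(fun i => w.1 i % p i, level p w), ⟨fun i => Int.emod_nonneg _ (p_ne_zero i), hw⟩,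
      mk_eq_mk_iff.mpr ⟨fun i => w.1 i / p i, fun i => ?_, ?_⟩⟩
    · exact (Int.emod_add_ediv_mul _ _).symm
    · simp [level]

theorem level_reflect (hp : ∀ i, 0 < p i) (w : (Fin n → ℤ) × ℤ) :
    level p ((fun _ => -1, (n : ℤ) - 1) - w) = -1 - level p w := by
  have ediv_reflect (i : Fin n) : (-1 - w.1 i) / (p i : ℤ) = -1 - w.1 i / p i := by
    have hpi : (0 : ℤ) < p i := mod_cast hp i
    have := Int.emod_add_ediv_mul (w.1 i) (p i)
    have := Int.emod_nonneg (w.1 i) hpi.ne'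
    have := Int.emod_lt_of_pos (w.1 i) hpi
    rw [Int.ediv_eq_iff_of_pos hpi]
    constructor <;> linarith
  simp only [level, Prod.fst_sub, Prod.snd_sub, Pi.sub_apply, ediv_reflect, Finset.sum_sub_distrib,
    Finset.sum_const, Finset.card_univ, Fintype.card_fin, nsmul_eq_mul]
  ring

theorem GLomega_zero_sub_mem_GLplus_iff (hp : ∀ i, 0 < p i) (z : GLgroup n p) :
    GLomega 0 n p - z ∈ GLplus n p ↔ z ∉ GLplus n p := by
  induction z using QuotientAddGroup.induction_on with | H w =>
  rw [GLomega_eq_mk, Nat.cast_zero, sub_zero, ← QuotientAddGroup.mk_sub, mk_mem_GLplus_iff hp,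
    mk_mem_GLplus_iff hp, level_reflect hp]
  lia

theorem GLle_zsmul_GLc_iff (hp : ∀ i, 0 < p i) (d : ℕ) (z : GLgroup n p) :
    GLle n p z ((d : ℤ) • GLc n p) ↔ z + GLomega d n p ∉ GLplus n p := by
  have GLomega_zero : GLomega 0 n p = (d : ℤ) • GLc n p + GLomega d n p := by
    rw [GLomega, GLomega, ← add_sub_assoc, ← add_zsmul]
    congr 2
    push_cast
    ring
  rw [GLle, ← GLomega_zero_sub_mem_GLplus_iff hp, GLomega_zero, add_sub_add_right_eq_sub]

theorem neg_GLomega_mem_GLplus {d : ℕ} (hn : n ≤ d + 1) : -GLomega d n p ∈ GLplus n p := by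
  rw [GLomega_eq_mk, ← QuotientAddGroup.mk_neg]
  have c_coeff_nonneg : 0 ≤ -((n : ℤ) - d - 1) := by lia
  exact mem_GLplus_iff_exists_nonneg.mpr ⟨_, ⟨fun _ => by simp, c_coeff_nonneg⟩, rfl⟩

theorem exists_zsmul_GLomega_eq {d : ℕ} (hp : ∀ i, 0 < p i) (hn : n ≤ d + 1) :
    ∃ N m : ℤ, 0 < m ∧ N • GLomega d n p = -m • GLc n p := by
  have p_dvd (i : Fin n) : p i ∣ ∏ j, p j := Finset.dvd_prod_of_mem p (Finset.mem_univ i)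
  set N := ∏ j, p j
  have N_pos : 0 < N := Finset.prod_pos fun i _ => hp i
  choose q hq using p_dvd
  have q_pos (i : Fin n) : 0 < q i := Nat.pos_of_mul_pos_left (hq i ▸ N_pos)
  have zsmul_GLx (i : Fin n) : (N : ℤ) • GLx n p i = (q i : ℤ) • GLc n p := by
    rw [natCast_zsmul, natCast_zsmul, hq i, mul_nsmul, nsmul_GLx]
  refine ⟨N, N * (d + 1 - n) + ∑ i, (q i : ℤ), ?_, ?_⟩
  · have n_le_sum : (n : ℤ) ≤ ∑ i, (q i : ℤ) := by
      simpa using Finset.card_nsmul_le_sum Finset.univ (fun i => (q i : ℤ)) 1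
        fun i _ => mod_cast q_pos i
    have : (0 : ℤ) ≤ d + 1 - n := by lia
    have : (1 : ℤ) ≤ N := mod_cast N_pos
    nlinarith
  · have sum_GLx : (N : ℤ) • ∑ i, GLx n p i = (∑ i, (q i : ℤ)) • GLc n p := by
      simp only [← Finset.sum_zsmul, zsmul_GLx]
      exact Finset.sum_smul.symm
    rw [GLomega, zsmul_sub, sum_GLx, ← mul_zsmul, ← sub_smul]
    congr 1
    ring

theorem add_zsmul_GLc_mem_GLplus_iff (hp : ∀ i, 0 < p i) (w : (Fin n → ℤ) × ℤ) (a : ℤ) :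
    (w : GLgroup n p) + a • GLc n p ∈ GLplus n p ↔ 0 ≤ level p w + a := by
  rw [zsmul_GLc, ← QuotientAddGroup.mk_add, mk_mem_GLplus_iff hp]
  simp [level, add_right_comm]

theorem exists_forall_sub_zsmul_GLomega_mem_GLplus_iff {d : ℕ} (hp : ∀ i, 0 < p i)
    (hn : n ≤ d + 1) : ∃ N m : ℤ, 0 < m ∧ ∀ (w : (Fin n → ℤ) × ℤ) (j : ℤ),
      (w : GLgroup n p) - (j * N) • GLomega d n p ∈ GLplus n p ↔ 0 ≤ level p w + j * m := by
  obtain ⟨N, m, hm, hN⟩ := exists_zsmul_GLomega_eq hp hn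
  refine ⟨N, m, hm, fun w j => ?_⟩
  rw [mul_zsmul, hN, neg_zsmul, zsmul_neg, sub_neg_eq_add, ← mul_zsmul,
    add_zsmul_GLc_mem_GLplus_iff hp]

theorem exists_sub_zsmul_GLomega_mem_GLplus {d : ℕ} (hp : ∀ i, 0 < p i) (hn : n ≤ d + 1)
    (z : GLgroup n p) : ∃ k : ℤ, z - k • GLomega d n p ∈ GLplus n p := by
  induction z using QuotientAddGroup.induction_on with | H w =>
  obtain ⟨N, m, hm, mem_iff⟩ := exists_forall_sub_zsmul_GLomega_mem_GLplus_iff hp hn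
  refine ⟨|level p w| * N, (mem_iff w _).mpr ?_⟩
  nlinarith [neg_abs_le (level p w), abs_nonneg (level p w)]

theorem exists_sub_zsmul_GLomega_notMem_GLplus {d : ℕ} (hp : ∀ i, 0 < p i) (hn : n ≤ d + 1)
    (z : GLgroup n p) : ∃ k : ℤ, z - k • GLomega d n p ∉ GLplus n p := by
  induction z using QuotientAddGroup.induction_on with | H w =>
  obtain ⟨N, m, hm, mem_iff⟩ := exists_forall_sub_zsmul_GLomega_mem_GLplus_iff hp hn
  refine ⟨-(|level p w| + 1) * N, (mem_iff w _).not.mpr ?_⟩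
  nlinarith [le_abs_self (level p w), abs_nonneg (level p w)]

end GLgroup

/-- If `n ≤ d + 1`, then the quotient map `𝕃 → 𝕃/ℤω⃗` restricts to a
bijection from the interval `[0, d c⃗]` onto `𝕃/ℤω⃗`. -/
theorem interval_bijects_onto_quotient (d n : ℕ) (hd : 1 ≤ d) (p : Fin n → ℕ)
    (hp : ∀ i, 0 < p i) (hn : n ≤ d + 1) :
    Set.BijOn (QuotientAddGroup.mk' (AddSubgroup.zmultiples (GLomega d n p)))
      {z : GLgroup n p | GLle n p 0 z ∧ GLle n p z ((d : ℤ) • GLc n p)}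
      Set.univ := by
  have interval_eq : {z : GLgroup n p | GLle n p 0 z ∧ GLle n p z ((d : ℤ) • GLc n p)} =
      {z | z ∈ GLplus n p ∧ z + GLomega d n p ∉ GLplus n p} := by
    ext z
    rw [Set.mem_ofPred_eq, GLgroup.GLle_zsmul_GLc_iff hp, GLle, sub_zero, Set.mem_ofPred_eq]
  rw [interval_eq]
  exact bijOn_mk'_of_isComplement <| isComplement_zmultiples_of_neg_mem
    (GLgroup.neg_GLomega_mem_GLplus hn)
    (GLgroup.exists_sub_zsmul_GLomega_mem_GLplus hp hn)
    (GLgroup.exists_sub_zsmul_GLomega_notMem_GLplus hp hn)
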